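/- (Controller Existence) Suppose H ≤ PL₊(I) is a chainless group with a single orbital A, and suppose some element h ∈ H realises one end of A. Let H̊_A be the subgroup of H consisting of all elements of H which act as the identity on some neighbourhood (in A) of each end of A. Then there exists an element c ∈ H such that H = ⟨c, H̊_A⟩ and c realises the orbital A (i.e., A is an orbital of c). Moreover, for each h ∈ H there exist a unique integer k and a unique element h̊ ∈ H̊_A with h = c^k h̊. -/

import Mathlib

open Set

namespace PLPaper

/-- We model `PL₊(I)` inside the group of bijections of `ℝ` with *opposite*
composition, so that the group acts on `ℝ` on the right:
`x · (g * h) = (x · g) · h`. -/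
abbrev PermR : Type := (Equiv.Perm ℝ)ᵐᵒᵖ

/-- The (right) action of `g` on the point `x`. -/
def ap (g : PermR) (x : ℝ) : ℝ := g.unop x

/-- `g` is affine on a neighbourhood of `x`. -/
def IsLocallyAffineAt (g : PermR) (x : ℝ) : Prop :=
  ∃ m b : ℝ, ∀ᶠ y in nhds x, ap g y = m * y + b

/-- The breakpoints of `g`: points of `(0,1)` where `g` is not locally affine
(equivalently, for a PL map, where the derivative fails to exist). -/
def Breakpoints (g : PermR) : Set ℝ :=
  {x ∈ Ioo (0:ℝ) 1 | ¬ IsLocallyAffineAt g x}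

/-- `g` is an orientation-preserving piecewise-linear homeomorphism of `[0,1]`
(extended by the identity to all of `ℝ`), with finitely many breakpoints. -/
def IsPL (g : PermR) : Prop :=
  StrictMono (ap g) ∧ (∀ x ∉ Ioo (0:ℝ) 1, ap g x = x) ∧ (Breakpoints g).Finite

/-- The support of `g`. -/
def Supp (g : PermR) : Set ℝ := {x | ap g x ≠ x}

/-- `(a,b)` is an orbital of `g`, i.e. a connected component of `Supp g`. -/
def IsOrbital (g : PermR) (a b : ℝ) : Prop :=
  a < b ∧ Ioo a b ⊆ Supp g ∧ a ∉ Supp g ∧ b ∉ Supp g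

/-- The support of a subgroup `G`. -/
def GSupp (G : Subgroup PermR) : Set ℝ := ⋃ g ∈ (G : Set PermR), Supp g

/-- `(a,b)` is an orbital of the group `G`, i.e. a connected component of its support. -/
def IsGroupOrbital (G : Subgroup PermR) (a b : ℝ) : Prop :=
  a < b ∧ Ioo a b ⊆ GSupp G ∧ a ∉ GSupp G ∧ b ∉ GSupp G

/-- The pair `g, h` carries a transition chain: orbitals `(a,b)` of `g` and
`(c,d)` of `h` with `a < c < b < d`. -/
def ElemsTransitionChain (g h : PermR) : Prop :=
  ∃ a b c d : ℝ, IsOrbital g a b ∧ IsOrbital h c d ∧ a < c ∧ c < b ∧ b < d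

/-- The pair `g, h` carries a one-sided overlap: orbitals `(a,b)` of `g` and
`(a,c)` of `h`, or `(a,b)` of `g` and `(c,b)` of `h`, where `a < c < b`. -/
def ElemsOneSidedOverlap (g h : PermR) : Prop :=
  ∃ a b c : ℝ, a < c ∧ c < b ∧
    ((IsOrbital g a b ∧ IsOrbital h a c) ∨ (IsOrbital g a b ∧ IsOrbital h c b))

def AdmitsTransitionChain (G : Subgroup PermR) : Prop :=
  ∃ g ∈ G, ∃ h ∈ G, ElemsTransitionChain g h

def AdmitsOneSidedOverlap (G : Subgroup PermR) : Prop :=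
  ∃ g ∈ G, ∃ h ∈ G, ElemsOneSidedOverlap g h

/-- `G` admits a bad overlap: orbitals `A` of `f ∈ G` and `B` of `g ∈ G` which
intersect, are distinct, and neither closure is contained in the other orbital. -/
def AdmitsBadOverlap (G : Subgroup PermR) : Prop :=
  ∃ f ∈ G, ∃ g ∈ G, ∃ a b c d : ℝ, IsOrbital f a b ∧ IsOrbital g c d ∧
    (Ioo a b ∩ Ioo c d).Nonempty ∧ Ioo a b ≠ Ioo c d ∧
    ¬ Icc a b ⊆ Ioo c d ∧ ¬ Icc c d ⊆ Ioo a b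

/-- A tower: a set of signed orbitals `((a,b), g)` with pairwise nested orbitals,
where equal orbitals force equal signatures. -/
def IsTower (T : Set ((ℝ × ℝ) × PermR)) : Prop :=
  (∀ p ∈ T, IsOrbital p.2 p.1.1 p.1.2) ∧
  (∀ p ∈ T, ∀ q ∈ T,
      Ioo p.1.1 p.1.2 ⊆ Ioo q.1.1 q.1.2 ∨ Ioo q.1.1 q.1.2 ⊆ Ioo p.1.1 p.1.2) ∧
  (∀ p ∈ T, ∀ q ∈ T, p.1 = q.1 → p.2 = q.2)

/-- `G` admits the tower `T` if `T` is a tower all of whose signatures lie in `G`. -/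
def AdmitsTower (G : Subgroup PermR) (T : Set ((ℝ × ℝ) × PermR)) : Prop :=
  IsTower T ∧ ∀ p ∈ T, p.2 ∈ G

def AdmitsInfiniteTower (G : Subgroup PermR) : Prop :=
  ∃ T : Set ((ℝ × ℝ) × PermR), AdmitsTower G T ∧ T.Infinite

/-- The set of breakpoints of the elements of a set `S`. -/
def BreakSet (S : Set PermR) : Set ℝ := ⋃ g ∈ S, Breakpoints g

/-- The derived length of a group: the least `n` with `derivedSeries G n = ⊥`. -/
noncomputable def derivedLength (G : Type*) [Group G] : ℕ :=
  sInf {n : ℕ | derivedSeries G n = ⊥}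

def RealisesLeftEnd (g : PermR) (a d : ℝ) : Prop := ∃ b : ℝ, b ≤ d ∧ IsOrbital g a b

def RealisesRightEnd (g : PermR) (a d : ℝ) : Prop := ∃ c : ℝ, a ≤ c ∧ IsOrbital g c d

/-- `g` acts as the identity on a neighbourhood (inside `(a,b)`) of each end of `(a,b)`. -/
def FixesEnds (g : PermR) (a b : ℝ) : Prop :=
  ∃ ε > 0, (∀ x ∈ Ioo a (a + ε), ap g x = x) ∧ (∀ x ∈ Ioo (b - ε) b, ap g x = x)

theorem ap_mul (g h : PermR) (x : ℝ) : ap (g * h) x = ap h (ap g x) := rfl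

theorem ap_one (x : ℝ) : ap 1 x = x := rfl

theorem ap_inv_ap (g : PermR) (x : ℝ) : ap g⁻¹ (ap g x) = x := by
  rw [← ap_mul, mul_inv_cancel, ap_one]

theorem ap_ap_inv (g : PermR) (x : ℝ) : ap g (ap g⁻¹ x) = x := by
  rw [← ap_mul, inv_mul_cancel, ap_one]

theorem pl_cont {g : PermR} (h : IsPL g) : Continuous (ap g) :=
  h.1.monotone.continuous_of_surjective (fun y => ⟨ap g⁻¹ y, ap_ap_inv g y⟩)

theorem affine_on (f : ℝ → ℝ) (hf : Continuous f) (p q : ℝ) (hpq : p < q)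
    (h : ∀ x ∈ Ioo p q, ∃ m b : ℝ, ∀ᶠ y in nhds x, f y = m * y + b) :
    ∃ m b : ℝ, ∀ x ∈ Icc p q, f x = m * x + b := by
  have h1 : ∀ x ∈ Ioo p q, ∃ m : ℝ, ∀ᶠ y in nhds x, HasDerivAt f m y := by
    intro x hx
    obtain ⟨m, b, hm⟩ := h x hx
    refine ⟨m, ?_⟩
    filter_upwards [hm.eventually_nhds] with y hy
    have : HasDerivAt (fun y => m * y + b) m y := by
      simpa using ((hasDerivAt_id y).const_mul m).add_const b
    exact this.congr_of_eventuallyEq hy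
  have h2 : ∀ x ∈ Ioo p q, HasDerivAt (deriv f) 0 x := by
    intro x hx
    obtain ⟨m, hm⟩ := h1 x hx
    refine (hasDerivAt_const x m).congr_of_eventuallyEq ?_
    filter_upwards [hm] with y hy using hy.deriv
  obtain ⟨m, hm⟩ := isOpen_Ioo.exists_is_const_of_deriv_eq_zero isPreconnected_Ioo
    (fun x hx => (h2 x hx).differentiableAt.differentiableWithinAt) (fun x hx => (h2 x hx).deriv)
  have h3 : ∀ x ∈ Ioo p q, HasDerivAt (fun x => f x - m * x) 0 x := by
    intro x hx
    obtain ⟨m', hm'⟩ := h1 x hx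
    have e := hm'.self_of_nhds
    have : m' = m := by rw [← hm x hx, e.deriv]
    subst this
    have h6 := e.sub ((hasDerivAt_id x).const_mul m')
    rw [mul_one, sub_self] at h6
    exact h6
  obtain ⟨b, hb⟩ := isOpen_Ioo.exists_is_const_of_deriv_eq_zero isPreconnected_Ioo
    (fun x hx => (h3 x hx).differentiableAt.differentiableWithinAt) (fun x hx => (h3 x hx).deriv)
  refine ⟨m, b, ?_⟩
  have h4 : EqOn f (fun x => m * x + b) (Ioo p q) := by
    intro x hx
    have := hb x hx
    simp only at this ⊢
    linarith
  have h5 := h4.closure hf (by fun_prop)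
  rw [closure_Ioo hpq.ne] at h5
  exact h5

theorem germ_exists {g : PermR} (h : IsPL g) (σ : ℝ) (hσ : σ = 1 ∨ σ = -1) (p : ℝ) :
    ∃ m : ℝ, 0 < m ∧ ∃ ε > 0, ∀ t ∈ Icc 0 ε, ap g (p + σ * t) = ap g p + σ * (m * t) := by
  have hc := pl_cont h
  have hfin : (Breakpoints g ∪ {0, 1}).Finite := h.2.2.union (by simp)
  have haff : ∀ x ∉ (Breakpoints g ∪ {0, 1}), IsLocallyAffineAt g x := by
    intro x hx
    by_contra hna
    apply hx
    left
    refine ⟨?_, hna⟩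
    by_contra hx'
    apply hna
    refine ⟨1, 0, ?_⟩
    have : x ∈ (Icc (0:ℝ) 1)ᶜ := by
      intro hx2
      simp only [mem_union, mem_insert_iff, mem_singleton_iff, not_or] at hx
      exact hx' ⟨lt_of_le_of_ne hx2.1 (Ne.symm hx.2.1), lt_of_le_of_ne hx2.2 hx.2.2⟩
    filter_upwards [isClosed_Icc.isOpen_compl.mem_nhds this] with y hy
    rw [h.2.1 y (fun hh => hy (Ioo_subset_Icc_self hh))]; ring
  have hcl : IsClosed ((Breakpoints g ∪ {0, 1}) \ {p}) := (hfin.subset sdiff_subset).isClosed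
  have hp : p ∈ ((Breakpoints g ∪ {0, 1}) \ {p})ᶜ := by simp
  obtain ⟨ε, he, hball⟩ := Metric.isOpen_iff.1 hcl.isOpen_compl p hp
  have hloc : ∀ x, x ≠ p → |x - p| < ε → IsLocallyAffineAt g x := by
    intro x hx hxp
    apply haff
    intro hb
    exact hball (show x ∈ Metric.ball p ε by simpa [Real.dist_eq] using hxp) ⟨hb, hx⟩
  have key : ∃ m : ℝ, ∀ t ∈ Icc 0 ε, ap g (p + σ * t) = ap g p + σ * (m * t) := by
    rcases hσ with rfl | rfl
    · obtain ⟨m, k, hm⟩ := affine_on (ap g) hc p (p + ε) (by linarith) (fun x hx =>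
        hloc x hx.1.ne' (by rw [abs_lt]; constructor <;> linarith [hx.1, hx.2]))
      refine ⟨m, fun t ht => ?_⟩
      rw [hm p ⟨le_rfl, by linarith⟩, hm _ ⟨by linarith [ht.1], by linarith [ht.2]⟩]
      ring
    · obtain ⟨m, k, hm⟩ := affine_on (ap g) hc (p - ε) p (by linarith) (fun x hx =>
        hloc x hx.2.ne (by rw [abs_lt]; constructor <;> linarith [hx.1, hx.2]))
      refine ⟨m, fun t ht => ?_⟩
      rw [hm p ⟨by linarith, le_rfl⟩, hm _ ⟨by linarith [ht.2], by linarith [ht.1]⟩]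
      ring
  obtain ⟨m, hm⟩ := key
  refine ⟨m, ?_, ε, he, hm⟩
  have e := hm ε ⟨he.le, le_rfl⟩
  have : 0 < m * ε := by
    rcases hσ with rfl | rfl
    · have := h.1 (show p < p + 1 * ε by linarith)
      linarith
    · have := h.1 (show p + -1 * ε < p by linarith)
      linarith
  exact pos_of_mul_pos_left this he.le

/-- `g` fixes `p` and has one-sided slope `m` at `p`, on the side of `σ`. -/
def Germ (σ p : ℝ) (g : PermR) (m : ℝ) : Prop :=
  ∃ ε > 0, ∀ t ∈ Icc 0 ε, ap g (p + σ * t) = p + σ * (m * t)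

theorem Germ.unique {σ p : ℝ} (hσ : σ ≠ 0) {g : PermR} {m n : ℝ} (h1 : Germ σ p g m)
    (h2 : Germ σ p g n) : m = n := by
  obtain ⟨e1, he1, h1⟩ := h1
  obtain ⟨e2, he2, h2⟩ := h2
  have hpos : 0 < min e1 e2 := lt_min he1 he2
  have a1 := h1 (min e1 e2) ⟨hpos.le, min_le_left _ _⟩
  have a2 := h2 (min e1 e2) ⟨hpos.le, min_le_right _ _⟩
  rw [a1] at a2
  have := mul_left_cancel₀ hσ (add_left_cancel a2)
  exact mul_right_cancel₀ hpos.ne' this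

theorem Germ.mul {σ p : ℝ} {g h : PermR} {m n : ℝ} (hm : 0 < m)
    (h1 : Germ σ p g m) (h2 : Germ σ p h n) : Germ σ p (g * h) (m * n) := by
  obtain ⟨e1, he1, h1⟩ := h1
  obtain ⟨e2, he2, h2⟩ := h2
  refine ⟨min e1 (e2 / m), lt_min he1 (div_pos he2 hm), fun t ht => ?_⟩
  rw [ap_mul, h1 t ⟨ht.1, ht.2.trans (min_le_left _ _)⟩, h2 (m * t) ⟨by have := ht.1; positivity, ?_⟩]
  · ring
  · have := ht.2.trans (min_le_right _ _)
    rw [le_div_iff₀ hm] at this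
    linarith

theorem Germ.one (σ p : ℝ) : Germ σ p 1 1 := ⟨1, one_pos, fun t _ => by rw [ap_one]; ring⟩

open Classical in
/-- The one-sided slope at `p` (junk value `1` if there is none). -/
noncomputable def slp (σ p : ℝ) (g : PermR) : ℝ :=
  if h : ∃ m, 0 < m ∧ Germ σ p g m then h.choose else 1

theorem slp_pos (σ p : ℝ) (g : PermR) : 0 < slp σ p g := by
  unfold slp
  split_ifs with h
  · exact h.choose_spec.1
  · exact one_pos

theorem germ_slp {σ p : ℝ} (hσ : σ = 1 ∨ σ = -1) {g : PermR} (h : IsPL g) (hp : ap g p = p) :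
    Germ σ p g (slp σ p g) := by
  have h : ∃ m, 0 < m ∧ Germ σ p g m := by
    obtain ⟨m, hm, e, he, H⟩ := germ_exists h σ hσ p
    exact ⟨m, hm, e, he, by rwa [hp] at H⟩
  unfold slp
  rw [dif_pos h]
  exact h.choose_spec.2

structure Ctx (H : Subgroup PermR) (a b : ℝ) : Prop where
  pl : ∀ g ∈ H, IsPL g
  chain : ¬ AdmitsTransitionChain H
  lt : a < b
  single : GSupp H = Ioo a b

section
variable {H : Subgroup PermR} {a b : ℝ}

theorem Ctx.fix (C : Ctx H a b) {g : PermR} (hg : g ∈ H) {x : ℝ} (hx : x ∉ Ioo a b) :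
    ap g x = x := by
  by_contra h
  apply hx
  rw [← C.single]
  exact mem_biUnion hg h

theorem Ctx.fa (C : Ctx H a b) {g : PermR} (hg : g ∈ H) : ap g a = a := C.fix hg (by simp)
theorem Ctx.fb (C : Ctx H a b) {g : PermR} (hg : g ∈ H) : ap g b = b := C.fix hg (by simp)

theorem Ctx.mem (C : Ctx H a b) {g : PermR} (hg : g ∈ H) {x : ℝ} (hx : x ∈ Ioo a b) :
    ap g x ∈ Ioo a b := by
  have h1 := (C.pl g hg).1 hx.1
  have h2 := (C.pl g hg).1 hx.2
  rw [C.fa hg] at h1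
  rw [C.fb hg] at h2
  exact ⟨h1, h2⟩

theorem Ctx.moved (C : Ctx H a b) {x : ℝ} (hx : x ∈ Ioo a b) : ∃ g ∈ H, x < ap g x := by
  rw [← C.single] at hx
  simp only [GSupp, mem_iUnion] at hx
  obtain ⟨g, hg, hx⟩ := hx
  have hx : ap g x ≠ x := hx
  rcases lt_or_gt_of_ne hx with h | h
  · refine ⟨g⁻¹, H.inv_mem hg, ?_⟩
    have := (C.pl _ (H.inv_mem hg)).1 h
    rwa [ap_inv_ap] at this
  · exact ⟨g, hg, h⟩

theorem Ctx.gL (C : Ctx H a b) {g : PermR} (hg : g ∈ H) : Germ 1 a g (slp 1 a g) :=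
  germ_slp (Or.inl rfl) (C.pl g hg) (C.fa hg)
theorem Ctx.gR (C : Ctx H a b) {g : PermR} (hg : g ∈ H) : Germ (-1) b g (slp (-1) b g) :=
  germ_slp (Or.inr rfl) (C.pl g hg) (C.fb hg)

theorem Ctx.mulL (C : Ctx H a b) {g h : PermR} (hg : g ∈ H) (hh : h ∈ H) :
    slp 1 a (g * h) = slp 1 a g * slp 1 a h :=
  (C.gL (H.mul_mem hg hh)).unique one_ne_zero ((C.gL hg).mul (slp_pos _ _ _) (C.gL hh))
theorem Ctx.mulR (C : Ctx H a b) {g h : PermR} (hg : g ∈ H) (hh : h ∈ H) :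
    slp (-1) b (g * h) = slp (-1) b g * slp (-1) b h :=
  (C.gR (H.mul_mem hg hh)).unique (by norm_num) ((C.gR hg).mul (slp_pos _ _ _) (C.gR hh))
theorem Ctx.oneL (C : Ctx H a b) : slp 1 a 1 = 1 :=
  (C.gL H.one_mem).unique one_ne_zero (Germ.one _ _)
theorem Ctx.oneR (C : Ctx H a b) : slp (-1) b 1 = 1 :=
  (C.gR H.one_mem).unique (by norm_num) (Germ.one _ _)
theorem Ctx.invL (C : Ctx H a b) {g : PermR} (hg : g ∈ H) : slp 1 a g⁻¹ = (slp 1 a g)⁻¹ := by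
  apply eq_inv_of_mul_eq_one_left
  rw [← C.mulL (H.inv_mem hg) hg, inv_mul_cancel, C.oneL]
theorem Ctx.invR (C : Ctx H a b) {g : PermR} (hg : g ∈ H) :
    slp (-1) b g⁻¹ = (slp (-1) b g)⁻¹ := by
  apply eq_inv_of_mul_eq_one_left
  rw [← C.mulR (H.inv_mem hg) hg, inv_mul_cancel, C.oneR]

/-- First fixed point to the right. -/
theorem next_fix {g : PermR} (hg : Continuous (ap g)) {x q : ℝ} (hxq : x ≤ q) (hq : ap g q = q) :
    ∃ d, x ≤ d ∧ d ≤ q ∧ ap g d = d ∧ ∀ y, x ≤ y → y < d → ap g y ≠ y := by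
  have hcl : IsClosed {y | x ≤ y ∧ ap g y = y} :=
    (isClosed_le continuous_const continuous_id).inter (isClosed_eq hg continuous_id)
  have hne : {y | x ≤ y ∧ ap g y = y}.Nonempty := ⟨q, hxq, hq⟩
  have hbd : BddBelow {y | x ≤ y ∧ ap g y = y} := ⟨x, fun y hy => hy.1⟩
  have hm := hcl.csInf_mem hne hbd
  refine ⟨_, hm.1, csInf_le hbd ⟨hxq, hq⟩, hm.2, fun y hy hlt h => ?_⟩
  exact absurd (csInf_le hbd ⟨hy, h⟩) (not_le.2 hlt)

theorem prev_fix {g : PermR} (hg : Continuous (ap g)) {x q : ℝ} (hxq : q ≤ x) (hq : ap g q = q) :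
    ∃ d, d ≤ x ∧ q ≤ d ∧ ap g d = d ∧ ∀ y, y ≤ x → d < y → ap g y ≠ y := by
  have hcl : IsClosed {y | y ≤ x ∧ ap g y = y} :=
    (isClosed_le continuous_id continuous_const).inter (isClosed_eq hg continuous_id)
  have hne : {y | y ≤ x ∧ ap g y = y}.Nonempty := ⟨q, hxq, hq⟩
  have hbd : BddAbove {y | y ≤ x ∧ ap g y = y} := ⟨x, fun y hy => hy.1⟩
  have hm := hcl.csSup_mem hne hbd
  refine ⟨_, hm.1, le_csSup hbd ⟨hxq, hq⟩, hm.2, fun y hy hlt h => ?_⟩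
  exact absurd (le_csSup hbd ⟨hy, h⟩) (not_le.2 hlt)

theorem orbital_at {g : PermR} (hg : Continuous (ap g)) {x p q : ℝ} (hp : p ≤ x) (hq : x ≤ q)
    (hfp : ap g p = p) (hfq : ap g q = q) (hx : ap g x ≠ x) :
    ∃ c d, p ≤ c ∧ c < x ∧ x < d ∧ d ≤ q ∧ IsOrbital g c d := by
  obtain ⟨d, h1, h2, h3, h4⟩ := next_fix hg hq hfq
  obtain ⟨c, k1, k2, k3, k4⟩ := prev_fix hg hp hfp
  have hcx : c < x := lt_of_le_of_ne k1 (by rintro rfl; exact hx k3)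
  have hxd : x < d := lt_of_le_of_ne h1 (by rintro rfl; exact hx h3)
  refine ⟨c, d, k2, hcx, hxd, h2, hcx.trans hxd, ?_, not_not.2 k3, not_not.2 h3⟩
  intro y hy
  rcases le_total x y with h | h
  · exact h4 y h hy.2
  · exact k4 y h hy.1

theorem Ctx.fullL (C : Ctx H a b) {g : PermR} (hg : g ∈ H) (hs : slp 1 a g ≠ 1) :
    IsOrbital g a b := by
  refine ⟨C.lt, ?_, not_not.2 (C.fa hg), not_not.2 (C.fb hg)⟩
  intro y hy hfy
  obtain ⟨e, he, hge⟩ := C.gL hg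
  have hmv : ∀ z, a < z → z ≤ a + e → ap g z ≠ z := by
    intro z h1 h2 h
    have := hge (z - a) ⟨by linarith, by linarith⟩
    rw [show a + 1 * (z - a) = z by ring, h] at this
    apply hs
    have h0 : z - a ≠ 0 := by linarith
    apply mul_right_cancel₀ h0
    linarith
  have hy2 : a + e ≤ y := by
    by_contra hlt
    exact hmv y hy.1 (by linarith) hfy
  have hgc := pl_cont (C.pl g hg)
  obtain ⟨d, hd1, hd2, hd3, hd4⟩ := next_fix hgc hy2 hfy
  have hd : d ∈ Ioo a b := ⟨by linarith, by linarith [hy.2]⟩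
  have horb : IsOrbital g a d := by
    refine ⟨hd.1, ?_, not_not.2 (C.fa hg), not_not.2 hd3⟩
    intro z hz
    rcases le_total z (a + e) with h | h
    · exact hmv z hz.1 h
    · exact hd4 z h hz.2
  obtain ⟨k, hk, hdk⟩ := C.moved hd
  have hmem : g⁻¹ * (k⁻¹ * g * k) ∈ H :=
    H.mul_mem (H.inv_mem hg) (H.mul_mem (H.mul_mem (H.inv_mem hk) hg) hk)
  have hsl : slp 1 a (g⁻¹ * (k⁻¹ * g * k)) = 1 := by
    rw [C.mulL (H.inv_mem hg) (H.mul_mem (H.mul_mem (H.inv_mem hk) hg) hk),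
      C.mulL (H.mul_mem (H.inv_mem hk) hg) hk, C.mulL (H.inv_mem hk) hg, C.invL hg, C.invL hk]
    have := (slp_pos 1 a g).ne'
    have := (slp_pos 1 a k).ne'
    field_simp
  have hdm : ap (g⁻¹ * (k⁻¹ * g * k)) d ≠ d := by
    rw [ap_mul, ap_mul, ap_mul]
    have e1 : ap g⁻¹ d = d := by conv_lhs => rw [← hd3, ap_inv_ap]
    rw [e1]
    intro h
    have h2 := congrArg (ap k⁻¹) h
    rw [ap_inv_ap] at h2
    have h3 : ap k⁻¹ d < d := by
      have := (C.pl _ (H.inv_mem hk)).1 hdk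
      rwa [ap_inv_ap] at this
    exact horb.2.1 ⟨(C.mem (H.inv_mem hk) hd).1, h3⟩ h2
  obtain ⟨e', he', hge'⟩ := C.gL hmem
  rw [hsl] at hge'
  have hpos : 0 < min e' (d - a) := lt_min he' (by linarith [hd.1])
  have hf := hge' (min e' (d - a)) ⟨hpos.le, min_le_left _ _⟩
  obtain ⟨p, q, h1, h2, h3, h4, h5⟩ := orbital_at (pl_cont (C.pl _ hmem))
    (p := a + 1 * min e' (d - a)) (x := d) (q := b) (by linarith [min_le_right e' (d - a)]) hd.2.le
    (by rw [hf]; ring) (C.fb hmem) hdm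
  exact C.chain ⟨g, hg, _, hmem, a, d, p, q, horb, h5, by linarith, h2, h3⟩

theorem Ctx.fullR (C : Ctx H a b) {g : PermR} (hg : g ∈ H) (hs : slp (-1) b g ≠ 1) :
    IsOrbital g a b := by
  refine ⟨C.lt, ?_, not_not.2 (C.fa hg), not_not.2 (C.fb hg)⟩
  intro y hy hfy
  obtain ⟨e, he, hge⟩ := C.gR hg
  have hmv : ∀ z, z < b → b - e ≤ z → ap g z ≠ z := by
    intro z h1 h2 h
    have := hge (b - z) ⟨by linarith, by linarith⟩
    rw [show b + -1 * (b - z) = z by ring, h] at this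
    apply hs
    have h0 : b - z ≠ 0 := by linarith
    apply mul_right_cancel₀ h0
    linarith
  have hy2 : y ≤ b - e := by
    by_contra hlt
    exact hmv y hy.2 (by linarith) hfy
  have hgc := pl_cont (C.pl g hg)
  obtain ⟨d, hd1, hd2, hd3, hd4⟩ := prev_fix hgc hy2 hfy
  have hd : d ∈ Ioo a b := ⟨by linarith [hy.1], by linarith⟩
  have horb : IsOrbital g d b := by
    refine ⟨hd.2, ?_, not_not.2 hd3, not_not.2 (C.fb hg)⟩
    intro z hz
    rcases le_total (b - e) z with h | h
    · exact hmv z hz.2 h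
    · exact hd4 z h hz.1
  obtain ⟨k', hk', hdk'⟩ := C.moved hd
  obtain ⟨k, hk, hdk⟩ : ∃ k ∈ H, d < ap k⁻¹ d := ⟨k'⁻¹, H.inv_mem hk', by rwa [inv_inv]⟩
  have hmem : g⁻¹ * (k⁻¹ * g * k) ∈ H :=
    H.mul_mem (H.inv_mem hg) (H.mul_mem (H.mul_mem (H.inv_mem hk) hg) hk)
  have hsl : slp (-1) b (g⁻¹ * (k⁻¹ * g * k)) = 1 := by
    rw [C.mulR (H.inv_mem hg) (H.mul_mem (H.mul_mem (H.inv_mem hk) hg) hk),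
      C.mulR (H.mul_mem (H.inv_mem hk) hg) hk, C.mulR (H.inv_mem hk) hg, C.invR hg, C.invR hk]
    have := (slp_pos (-1) b g).ne'
    have := (slp_pos (-1) b k).ne'
    field_simp
  have hdm : ap (g⁻¹ * (k⁻¹ * g * k)) d ≠ d := by
    rw [ap_mul, ap_mul, ap_mul]
    have e1 : ap g⁻¹ d = d := by conv_lhs => rw [← hd3, ap_inv_ap]
    rw [e1]
    intro h
    have h2 := congrArg (ap k⁻¹) h
    rw [ap_inv_ap] at h2
    exact horb.2.1 ⟨hdk, (C.mem (H.inv_mem hk) hd).2⟩ h2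
  obtain ⟨e', he', hge'⟩ := C.gR hmem
  rw [hsl] at hge'
  have hpos : 0 < min e' (b - d) := lt_min he' (by linarith [hd.2])
  have hf := hge' (min e' (b - d)) ⟨hpos.le, min_le_left _ _⟩
  obtain ⟨p, q, h1, h2, h3, h4, h5⟩ := orbital_at (pl_cont (C.pl _ hmem))
    (q := b + -1 * min e' (b - d)) (x := d) (p := a) hd.1.le (by linarith [min_le_right e' (b - d)])
    (C.fa hmem) (by rw [hf]; ring) hdm
  exact C.chain ⟨_, hmem, g, hg, p, q, d, b, h5, horb, h2, h3, by linarith⟩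

end

section
variable {H : Subgroup PermR} {a b : ℝ}

theorem IsOrbital.moves {g : PermR} {p q : ℝ} (h : IsOrbital g p q) (x : ℝ) (hx : x ∈ Ioo p q) :
    ap g x ≠ x := h.2.1 hx

theorem Ctx.fixes_iff (C : Ctx H a b) {g : PermR} (hg : g ∈ H) :
    FixesEnds g a b ↔ slp 1 a g = 1 := by
  constructor
  · rintro ⟨e, he, h1, -⟩
    refine (C.gL hg).unique one_ne_zero ⟨e / 2, by positivity, fun t ht => ?_⟩
    rcases eq_or_lt_of_le ht.1 with h | h
    · subst h
      simp [C.fa hg]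
    · rw [h1 _ ⟨by linarith, by linarith [ht.2]⟩]
      ring
  · intro hs
    obtain ⟨e, he, h1⟩ := C.gL hg
    rw [hs] at h1
    have hR : slp (-1) b g = 1 := by
      by_contra hR
      have ho := C.fullR hg hR
      have hpos : 0 < min e ((b - a) / 2) := lt_min he (by linarith [C.lt])
      have h2 := h1 _ ⟨hpos.le, min_le_left _ _⟩
      refine ho.moves (a + 1 * min e ((b - a) / 2)) ⟨by linarith, ?_⟩ (by rw [h2]; ring)
      linarith [min_le_right e ((b - a) / 2), C.lt]
    obtain ⟨e', he', h2⟩ := C.gR hg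
    rw [hR] at h2
    refine ⟨min e e', lt_min he he', fun x hx => ?_, fun x hx => ?_⟩
    · have := h1 (x - a) ⟨by linarith [hx.1], by linarith [hx.2, min_le_left e e']⟩
      ring_nf at this
      exact this
    · have := h2 (b - x) ⟨by linarith [hx.2], by linarith [hx.1, min_le_right e e']⟩
      ring_nf at this
      exact this

theorem Ctx.up (C : Ctx H a b) {g : PermR} (hg : g ∈ H) (hs : 1 < slp 1 a g) {x : ℝ}
    (hx : x ∈ Ioo a b) : x < ap g x := by
  have ho := C.fullL hg hs.ne'
  by_contra hlt
  push Not at hlt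
  obtain ⟨e, he, h1⟩ := C.gL hg
  have hpos : 0 < min e (x - a) := lt_min he (by linarith [hx.1])
  have h2 := h1 _ ⟨hpos.le, min_le_left _ _⟩
  have hle : a + 1 * min e (x - a) ≤ x := by linarith [min_le_right e (x - a)]
  have hgc := pl_cont (C.pl g hg)
  have h3 : (0:ℝ) ∈ Icc (ap g x - x)
      (ap g (a + 1 * min e (x - a)) - (a + 1 * min e (x - a))) := by
    refine ⟨by linarith, ?_⟩
    rw [h2]
    nlinarith
  obtain ⟨y, hy, hy0⟩ := intermediate_value_Icc' (f := fun y => ap g y - y) hle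
    (by fun_prop) h3
  exact ho.2.1 ⟨by linarith [hy.1], by linarith [hy.2, hx.2]⟩ (sub_eq_zero.1 hy0)

theorem Ctx.down (C : Ctx H a b) {g : PermR} (hg : g ∈ H) (hs : slp 1 a g < 1) {x : ℝ}
    (hx : x ∈ Ioo a b) : ap g x < x := by
  have h1 : 1 < slp 1 a g⁻¹ := by
    rw [C.invL hg]
    exact (one_lt_inv₀ (slp_pos _ _ _)).2 hs
  have := C.up (H.inv_mem hg) h1 (C.mem hg hx)
  rwa [ap_inv_ap] at this

theorem Ctx.slopes_lt (C : Ctx H a b) {g h : PermR} (hg : g ∈ H) (hh : h ∈ H)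
    (hs : slp 1 a g < slp 1 a h) {x : ℝ} (hx : x ∈ Ioo a b) : ap g x < ap h x := by
  have h1 : slp 1 a (g * h⁻¹) < 1 := by
    rw [C.mulL hg (H.inv_mem hh), C.invL hh, ← div_eq_mul_inv, div_lt_one (slp_pos _ _ _)]
    exact hs
  have h2 := C.down (H.mul_mem hg (H.inv_mem hh)) h1 hx
  have h3 := (C.pl h hh).1 h2
  rwa [ap_mul, ap_ap_inv] at h3

theorem Ctx.right_lt (C : Ctx H a b) {g : PermR} (hg : g ∈ H) (hs : 1 < slp 1 a g) :
    slp (-1) b g < 1 := by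
  obtain ⟨e, he, h1⟩ := C.gR hg
  have hpos : 0 < min e ((b - a) / 2) := lt_min he (by linarith [C.lt])
  have h2 := h1 _ ⟨hpos.le, min_le_left _ _⟩
  have h3 := C.up hg hs (x := b + -1 * min e ((b - a) / 2))
    ⟨by linarith [C.lt, min_le_right e ((b - a) / 2)], by linarith⟩
  rw [h2] at h3
  nlinarith

theorem Ctx.toEnd (C : Ctx H a b) {c : PermR} (hc : c ∈ H) (hs : 1 < slp 1 a c) {w : ℝ}
    (hw : w ∈ Ioo a b) {r : ℝ} (hr : r < b) : ∃ N : ℕ, r < ap (c ^ N) w := by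
  by_contra hno
  push Not at hno
  have hbd : BddAbove (range fun N : ℕ => ap (c ^ N) w) := by
    refine ⟨r, ?_⟩
    rintro _ ⟨N, rfl⟩
    exact hno N
  set s := sSup (range fun N : ℕ => ap (c ^ N) w) with hsdef
  have hle : ∀ N : ℕ, ap (c ^ N) w ≤ s := fun N => le_csSup hbd ⟨N, rfl⟩
  have hsr : s ≤ r := csSup_le (range_nonempty _) (by rintro _ ⟨N, rfl⟩; exact hno N)
  have hws : w ≤ s := by simpa [ap_one] using hle 0
  have hsI : s ∈ Ioo a b := ⟨by linarith [hw.1], by linarith⟩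
  have hlt : ap c⁻¹ s < s := by
    have := (C.pl _ (H.inv_mem hc)).1 (C.up hc hs hsI)
    rwa [ap_inv_ap] at this
  obtain ⟨_, ⟨N, rfl⟩, hN⟩ := exists_lt_of_lt_csSup (range_nonempty _) hlt
  have h2 := (C.pl c hc).1 hN
  rw [ap_ap_inv] at h2
  have h3 := hle (N + 1)
  rw [pow_succ, ap_mul] at h3
  exact absurd h2 (not_lt.2 h3)

/-- A map commuting with a contraction along an orbit is exactly linear there. -/
theorem linear_of_commute (σ p ρ m e : ℝ) (f q : PermR) (hρ0 : 0 < ρ) (hρ : ρ < 1)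
    (he : ∀ t ∈ Icc 0 e, ap f (p + σ * t) = p + σ * (ρ * t))
    (hq : Germ σ p q m) (hσ : σ ≠ 0) (s s' : ℝ) (hs : s ∈ Icc 0 e) (hs' : s' ∈ Icc 0 e)
    (hss : ap q (p + σ * s) = p + σ * s')
    (hcomm : ∀ n : ℕ, ap (f ^ n * q) (p + σ * s) = ap (q * f ^ n) (p + σ * s)) :
    s' = m * s := by
  have hit : ∀ t ∈ Icc 0 e, ∀ n : ℕ, ap (f ^ n) (p + σ * t) = p + σ * (ρ ^ n * t) := by
    intro t ht n
    induction n with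
    | zero => simp [ap_one]
    | succ n ih =>
      have h1 : ρ ^ n ≤ 1 := pow_le_one₀ hρ0.le hρ.le
      have h2 : 0 < ρ ^ n := pow_pos hρ0 n
      rw [pow_succ, ap_mul, ih, he _ ⟨mul_nonneg h2.le ht.1, by nlinarith [ht.1, ht.2]⟩]
      ring
  obtain ⟨η, hη, hqη⟩ := hq
  have hlim : Filter.Tendsto (fun n : ℕ => ρ ^ n * s) Filter.atTop (nhds 0) := by
    simpa using (tendsto_pow_atTop_nhds_zero_of_lt_one hρ0.le hρ).mul_const s
  obtain ⟨n, hn⟩ := (hlim.eventually (gt_mem_nhds hη)).exists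
  have h := hcomm n
  have hpn : 0 < ρ ^ n := pow_pos hρ0 n
  rw [ap_mul, ap_mul, hss, hit s hs, hit s' hs', hqη _ ⟨mul_nonneg hpn.le hs.1, hn.le⟩] at h
  have h4 := mul_left_cancel₀ hσ (add_left_cancel h)
  apply mul_left_cancel₀ hpn.ne'
  linarith

theorem Ctx.discrete (C : Ctx H a b) {c : PermR} (hc : c ∈ H) (hs : 1 < slp 1 a c) :
    ∃ δ > 1, ∀ g ∈ H, 1 < slp 1 a g → δ ≤ slp 1 a g := by
  by_contra hno
  push Not at hno
  have hci := H.inv_mem hc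
  -- linear neighbourhoods of the ends
  obtain ⟨e, he, hce⟩ := C.gL hci
  obtain ⟨e', he', hce'⟩ := C.gR hc
  have hρ : slp 1 a c⁻¹ < 1 := by
    rw [C.invL hc]; exact inv_lt_one_of_one_lt₀ hs
  -- a base point close to `a`
  set r := min (e / 2) ((b - a) / 2) with hr
  have hr0 : 0 < r := lt_min (by linarith) (by linarith [C.lt])
  have hrI : a + r ∈ Ioo a b :=
    ⟨by linarith, by linarith [min_le_right (e / 2) ((b - a) / 2), C.lt]⟩
  set x := ap c⁻¹ (a + r) with hx
  have hxI : x ∈ Ioo a b := C.mem hci hrI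
  have hxc : ap c x = a + r := ap_ap_inv c _
  set W := {y | ∃ g ∈ H, 1 < slp 1 a g ∧ ap g x = y} with hW
  have hWne : W.Nonempty := ⟨a + r, c, hc, hs, hxc⟩
  have hWbd : BddBelow W := by
    refine ⟨x, ?_⟩
    rintro _ ⟨g, hg, h1, rfl⟩
    exact (C.up hg h1 hxI).le
  set w := sInf W with hw
  have hwle : w ≤ a + r := csInf_le hWbd ⟨c, hc, hs, hxc⟩
  have hxw : x ≤ w := le_csInf hWne (by rintro _ ⟨g, hg, h1, rfl⟩; exact (C.up hg h1 hxI).le)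
  have hwI : w ∈ Ioo a b := ⟨by linarith [hxI.1], by linarith [hrI.2]⟩
  -- `w` is fixed by the kernel
  have hle : ∀ k ∈ H, slp 1 a k = 1 → ap k w ≤ w := by
    intro k hk hk1
    apply le_csInf hWne
    rintro _ ⟨g, hg, h1, rfl⟩
    have h2 : w ≤ ap (g * k⁻¹) x := by
      refine csInf_le hWbd ⟨_, H.mul_mem hg (H.inv_mem hk), ?_, rfl⟩
      rw [C.mulL hg (H.inv_mem hk), C.invL hk, hk1]
      simpa using h1
    have h3 := (C.pl k hk).1.monotone h2
    rwa [ap_mul, ap_ap_inv] at h3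
  have hfix : ∀ k ∈ H, slp 1 a k = 1 → ap k w = w := by
    intro k hk hk1
    apply le_antisymm (hle k hk hk1)
    have h2 := hle k⁻¹ (H.inv_mem hk) (by rw [C.invL hk, hk1, inv_one])
    have h3 := (C.pl k hk).1.monotone h2
    rwa [ap_ap_inv] at h3
  have hcomm : ∀ g ∈ H, ∀ h ∈ H, ap (g * h) w = ap (h * g) w := by
    intro g hg h hh
    have hgh := H.mul_mem hg hh
    have hhg := H.mul_mem hh hg
    have h1 : slp 1 a ((g * h) * (h * g)⁻¹) = 1 := by
      rw [C.mulL hgh (H.inv_mem hhg), C.invL hhg, C.mulL hg hh, C.mulL hh hg]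
      have := (slp_pos 1 a g).ne'
      have := (slp_pos 1 a h).ne'
      field_simp
    have h2 := hfix _ (H.mul_mem hgh (H.inv_mem hhg)) h1
    rw [ap_mul] at h2
    have h3 := congrArg (ap (h * g)) h2
    rwa [ap_ap_inv] at h3
  -- small elements
  have hsmall : ∀ δ > 0, ∃ g ∈ H, 1 < slp 1 a g ∧ ap (g * g) w < w + δ := by
    intro δ hδ
    obtain ⟨_, ⟨h, hh, h1, rfl⟩, hlt⟩ :=
      exists_lt_of_csInf_lt hWne (show sInf W < w + δ by linarith)
    set t := min 1 ((slp 1 a h - 1) / 7) with ht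
    have ht0 : 0 < t := lt_min one_pos (by linarith)
    have ht1 : t ≤ 1 := min_le_left _ _
    have ht7 : t ≤ (slp 1 a h - 1) / 7 := min_le_right _ _
    obtain ⟨g, hg, hg1, hg2⟩ := hno (1 + t) (by linarith)
    refine ⟨g, hg, hg1, ?_⟩
    have hgg := H.mul_mem hg hg
    have hw1 : w ≤ ap g x := csInf_le hWbd ⟨g, hg, hg1, rfl⟩
    have hw2 := (C.pl _ hgg).1.monotone hw1
    rw [← ap_mul] at hw2
    have hw3 : ap (g * (g * g)) x < ap h x := by
      apply C.slopes_lt (H.mul_mem hg hgg) hh _ hxI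
      rw [C.mulL hg hgg, C.mulL hg hg]
      have h3 : slp 1 a g * (slp 1 a g * slp 1 a g) < (1 + t) * ((1 + t) * (1 + t)) := by
        have := slp_pos 1 a g
        gcongr
      nlinarith [mul_pos ht0 ht0]
    linarith
  -- push `w` close to `b`
  obtain ⟨N, hN⟩ := C.toEnd hc hs hwI (show b - e' < b by linarith)
  have hcN := H.pow_mem hc N
  obtain ⟨m, hm0, ε, hε, hmε⟩ := germ_exists (C.pl _ hcN) 1 (Or.inl rfl) w
  have key : ∀ q ∈ H, 1 < slp 1 a q → ap q w < w + min ε (e / 2) →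
      (1 - slp (-1) b q) * (b - ap (c ^ N) w) = m * ((slp 1 a q - 1) * (w - a)) := by
    intro q hq hq1 hqw
    have hup := C.up hq hq1 hwI
    have hqI := C.mem hq hwI
    have hre : r ≤ e / 2 := min_le_left _ _
    have hL := linear_of_commute 1 a (slp 1 a c⁻¹) (slp 1 a q) e c⁻¹ q (slp_pos _ _ _) hρ hce
      (C.gL hq) one_ne_zero (w - a) (ap q w - a) ⟨by linarith [hwI.1], by linarith⟩
      ⟨by linarith [hqI.1], by linarith [min_le_right ε (e / 2)]⟩
      (by rw [show a + 1 * (w - a) = w by ring]; ring)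
      (by
        intro n
        rw [show a + 1 * (w - a) = w by ring]
        exact hcomm _ (H.pow_mem hci n) _ hq)
    have hNI := C.mem hcN hwI
    have hqNI := C.mem hcN hqI
    have hmono := (C.pl _ hcN).1 hup
    have hcq : ap q (ap (c ^ N) w) = ap (c ^ N) (ap q w) := hcomm _ hcN _ hq
    have hR := linear_of_commute (-1) b (slp (-1) b c) (slp (-1) b q) e' c q (slp_pos _ _ _)
      (C.right_lt hc hs) hce'
      (C.gR hq) (by norm_num) (b - ap (c ^ N) w) (b - ap (c ^ N) (ap q w))
      ⟨by linarith [hNI.2], by linarith⟩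
      ⟨by linarith [hqNI.2], by linarith⟩
      (by rw [show b + -1 * (b - ap (c ^ N) w) = ap (c ^ N) w by ring, hcq]; ring)
      (by
        intro n
        rw [show b + -1 * (b - ap (c ^ N) w) = ap (c ^ N) w by ring]
        have h1 := hcomm _ (H.pow_mem hc (N + n)) _ hq
        rw [pow_add, ap_mul, ap_mul, ap_mul, ap_mul] at h1
        rw [ap_mul, ap_mul, h1, hcq])
    have hA := hmε (ap q w - w) ⟨by linarith, by linarith [min_le_left ε (e / 2)]⟩
    rw [show w + 1 * (ap q w - w) = ap q w by ring] at hA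
    have h5 : ap q w - w = (slp 1 a q - 1) * (w - a) := by linarith
    rw [h5] at hA
    linarith
  obtain ⟨g, hg, hg1, hgw⟩ := hsmall _ (lt_min hε (show 0 < e / 2 by linarith))
  have hgg := H.mul_mem hg hg
  have hsgg : 1 < slp 1 a (g * g) := by
    rw [C.mulL hg hg]; nlinarith
  have hgw1 : ap g w < w + min ε (e / 2) := by
    have := C.up hg hg1 (C.mem hg hwI)
    rw [← ap_mul] at this
    linarith
  have k1 := key g hg hg1 hgw1
  have k2 := key _ hgg hsgg hgw
  rw [C.mulL hg hg, C.mulR hg hg] at k2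
  have hR := C.right_lt hg hg1
  have hB : 0 < b - ap (c ^ N) w := by linarith [(C.mem hcN hwI).2]
  have hP : 0 < (1 - slp (-1) b g) * (b - ap (c ^ N) w) := mul_pos (by linarith) hB
  have h6 : ((1 - slp (-1) b g) * (b - ap (c ^ N) w)) * (1 + slp (-1) b g)
      = ((1 - slp (-1) b g) * (b - ap (c ^ N) w)) * (1 + slp 1 a g) := by
    have : ((1 - slp (-1) b g) * (b - ap (c ^ N) w)) * (1 + slp 1 a g)
      = m * ((slp 1 a g - 1) * (w - a)) * (1 + slp 1 a g) := by rw [k1]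
    rw [this]
    linarith
  have := mul_left_cancel₀ hP.ne' h6
  linarith

theorem Ctx.zpowL (C : Ctx H a b) {g : PermR} (hg : g ∈ H) (n : ℤ) :
    slp 1 a (g ^ n) = slp 1 a g ^ n := by
  have hnat : ∀ n : ℕ, slp 1 a (g ^ n) = slp 1 a g ^ n := by
    intro n
    induction n with
    | zero => simp [C.oneL]
    | succ n ih => rw [pow_succ, C.mulL (H.pow_mem hg n) hg, ih, pow_succ]
  cases n with
  | ofNat n => simpa using hnat n
  | negSucc n =>
    rw [zpow_negSucc, zpow_negSucc, C.invL (H.pow_mem hg _), hnat]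

/-- The group of logarithms of slopes at `a`. -/
noncomputable def Ctx.logs (C : Ctx H a b) : AddSubgroup ℝ where
  carrier := {t | ∃ g ∈ H, Real.log (slp 1 a g) = t}
  zero_mem' := ⟨1, H.one_mem, by rw [C.oneL, Real.log_one]⟩
  add_mem' := by
    rintro _ _ ⟨g, hg, rfl⟩ ⟨h, hh, rfl⟩
    exact ⟨g * h, H.mul_mem hg hh, by
      rw [C.mulL hg hh, Real.log_mul (slp_pos _ _ _).ne' (slp_pos _ _ _).ne']⟩
  neg_mem' := by
    rintro _ ⟨g, hg, rfl⟩
    exact ⟨g⁻¹, H.inv_mem hg, by rw [C.invL hg, Real.log_inv]⟩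

theorem Ctx.main (C : Ctx H a b) {h : PermR} (hh : h ∈ H) (hs : slp 1 a h ≠ 1) :
    ∃ c ∈ H, IsOrbital c a b ∧
      H = Subgroup.closure ({c} ∪ {g : PermR | g ∈ H ∧ FixesEnds g a b}) ∧
      ∀ h ∈ H, ∃! p : ℤ × PermR, (p.2 ∈ H ∧ FixesEnds p.2 a b) ∧ h = c ^ p.1 * p.2 := by
  obtain ⟨c₀, hc₀, hs₀⟩ : ∃ c ∈ H, 1 < slp 1 a c := by
    rcases lt_or_gt_of_ne hs with h1 | h1
    · refine ⟨h⁻¹, H.inv_mem hh, ?_⟩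
      rw [C.invL hh]
      exact (one_lt_inv₀ (slp_pos _ _ _)).2 h1
    · exact ⟨h, hh, h1⟩
  obtain ⟨δ, hδ, hδ'⟩ := C.discrete hc₀ hs₀
  obtain ⟨t, ht⟩ := AddSubgroup.cyclic_of_isolated_zero (H := C.logs) (Real.log_pos hδ) (by
    rw [Set.disjoint_left]
    rintro _ ⟨g, hg, rfl⟩ ⟨h1, h2⟩
    have h3 := hδ' g hg ((Real.log_pos_iff (slp_pos _ _ _).le).1 h1)
    exact absurd h2 (not_lt.2 (Real.log_le_log (by linarith) h3)))
  obtain ⟨c, hc, hct⟩ : t ∈ C.logs := by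
    rw [ht]; exact AddSubgroup.mem_closure_singleton_self t
  have hgen : ∀ g ∈ H, ∃ n : ℤ, slp 1 a g = slp 1 a c ^ n := by
    intro g hg
    have h1 : Real.log (slp 1 a g) ∈ C.logs := ⟨g, hg, rfl⟩
    rw [ht, AddSubgroup.mem_closure_singleton] at h1
    obtain ⟨n, hn⟩ := h1
    refine ⟨n, Real.log_injOn_pos (slp_pos _ _ _) (zpow_pos (slp_pos _ _ _) n) ?_⟩
    rw [Real.log_zpow, hct, ← hn, zsmul_eq_mul]
  have hc1 : slp 1 a c ≠ 1 := by
    intro h1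
    obtain ⟨n, hn⟩ := hgen c₀ hc₀
    rw [h1, one_zpow] at hn
    linarith
  have hdec : ∀ h ∈ H, ∃ n : ℤ, c ^ (-n) * h ∈ H ∧ FixesEnds (c ^ (-n) * h) a b := by
    intro h hh
    obtain ⟨n, hn⟩ := hgen h hh
    have hm := H.mul_mem (H.zpow_mem hc (-n)) hh
    refine ⟨n, hm, (C.fixes_iff hm).2 ?_⟩
    rw [C.mulL (H.zpow_mem hc (-n)) hh, C.zpowL hc, hn, zpow_neg,
      inv_mul_cancel₀ (zpow_pos (slp_pos _ _ _) n).ne']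
  refine ⟨c, hc, C.fullL hc hc1, ?_, ?_⟩
  · apply le_antisymm
    · intro h hh
      obtain ⟨n, hn⟩ := hdec h hh
      rw [show h = c ^ n * (c ^ (-n) * h) by group]
      refine Subgroup.mul_mem _ (Subgroup.zpow_mem _ ?_ n) ?_
      · exact Subgroup.subset_closure (mem_union_left _ (mem_singleton c))
      · exact Subgroup.subset_closure (mem_union_right _ hn)
    · rw [Subgroup.closure_le]
      rintro g (hg | hg)
      · rw [mem_singleton_iff.1 hg]; exact hc
      · exact hg.1
  · intro h hh
    obtain ⟨n, hn⟩ := hdec h hh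
    refine ⟨(n, c ^ (-n) * h), ⟨hn, by group⟩, ?_⟩
    rintro ⟨k, q⟩ ⟨⟨hq, hqf⟩, hk⟩
    simp only at hq hqf hk
    have hkn : k = n := by
      have e1 := (C.fixes_iff hn.1).1 hn.2
      have e2 := (C.fixes_iff hq).1 hqf
      rw [C.mulL (H.zpow_mem hc _) hh, C.zpowL hc, hk, C.mulL (H.zpow_mem hc _) hq, C.zpowL hc,
        e2, mul_one, ← zpow_add₀ (slp_pos _ _ _).ne',
        zpow_eq_one_iff_right₀ (slp_pos _ _ _).le hc1] at e1
      omega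
    subst hkn
    rw [hk]
    congr 1
    group

end

theorem statement7 (H : Subgroup PermR) (hPL : ∀ g ∈ H, IsPL g)
    (hchainless : ¬ AdmitsTransitionChain H) (a b : ℝ) (hab : a < b)
    (hsingle : GSupp H = Ioo a b)
    (hreal : ∃ h ∈ H, RealisesLeftEnd h a b ∨ RealisesRightEnd h a b) :
    ∃ c ∈ H, IsOrbital c a b ∧
      H = Subgroup.closure ({c} ∪ {g : PermR | g ∈ H ∧ FixesEnds g a b}) ∧
      ∀ h ∈ H, ∃! p : ℤ × PermR, (p.2 ∈ H ∧ FixesEnds p.2 a b) ∧ h = c ^ p.1 * p.2 := by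
  have C : Ctx H a b := ⟨hPL, hchainless, hab, hsingle⟩
  obtain ⟨h, hh, hr⟩ := hreal
  refine C.main hh ?_
  intro h1
  obtain ⟨ε, hε, e1, e2⟩ := (C.fixes_iff hh).2 h1
  rcases hr with ⟨d, hd, ho⟩ | ⟨d, hd, ho⟩
  · have hpos : 0 < min (ε / 2) ((d - a) / 2) := lt_min (by linarith) (by linarith [ho.1])
    have m1 := min_le_left (ε / 2) ((d - a) / 2)
    have m2 := min_le_right (ε / 2) ((d - a) / 2)
    have := ho.1
    exact ho.moves (a + min (ε / 2) ((d - a) / 2)) ⟨by linarith, by linarith⟩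
      (e1 _ ⟨by linarith, by linarith⟩)
  · have hpos : 0 < min (ε / 2) ((b - d) / 2) := lt_min (by linarith) (by linarith [ho.1])
    have m1 := min_le_left (ε / 2) ((b - d) / 2)
    have m2 := min_le_right (ε / 2) ((b - d) / 2)
    have := ho.1
    exact ho.moves (b - min (ε / 2) ((b - d) / 2)) ⟨by linarith, by linarith⟩
      (e2 _ ⟨by linarith, by linarith⟩)

end PLPaper
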